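/- Let x ~ N(0,Σ) be a d-dimensional Gaussian with Σ positive definite, and let y ∈ {−1,+1} satisfy P(y=1 | x) = g(βᵀx) for a measurable function g: R → [0,1] and fixed β ∈ R^d with βᵀΣβ > 0. Then E[yx] = 2·E[(g(βᵀx) − 1/2)·(βᵀx)/(βᵀΣβ)]·Σβ. -/

import Mathlib

open MeasureTheory ProbabilityTheory Matrix

/-!
Subtracting from `Z` its regression on `X` leaves a remainder uncorrelated with `X`; for jointly
Gaussian `X`, `Z` it is even independent of `X`, hence uncorrelated with every `f(X)`. So
`cov[f(X), Z]` is `cov[X, Z] / Var[X]` times `cov[f(X), X]` (Bussgang's theorem). The theorem is the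
case `X = βᵀx`, `Z = x k`, `f = 2g - 1`, where `cov[X, Z] / Var[X] = (Σβ) k / (βᵀΣβ)`.
-/

section JointlyGaussianPair

variable {Ω : Type*} [MeasurableSpace Ω] {μ : Measure Ω} {X Z : Ω → ℝ} {f : ℝ → ℝ}

lemma indepFun_sub_covariance_div_variance_mul (hXZ : HasGaussianLaw (fun ω ↦ (X ω, Z ω)) μ)
    (hX : Var[X; μ] ≠ 0) :
    IndepFun X (fun ω ↦ Z ω - cov[X, Z; μ] / Var[X; μ] * X ω) μ := by
  have := hXZ.isProbabilityMeasure
  set c := cov[X, Z; μ] / Var[X; μ] with hc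
  have hpair : HasGaussianLaw (fun ω ↦ (X ω, Z ω - c * X ω)) μ :=
    hXZ.map_fun ((ContinuousLinearMap.fst ℝ ℝ ℝ).prod
      (ContinuousLinearMap.snd ℝ ℝ ℝ - c • ContinuousLinearMap.fst ℝ ℝ ℝ))
  refine hpair.indepFun_of_covariance_eq_zero ?_
  rw [covariance_fun_sub_right hXZ.fst.memLp_two hXZ.snd.memLp_two
      (hXZ.fst.memLp_two.const_mul c), covariance_const_mul_right,
    covariance_self hXZ.fst.aemeasurable, hc, div_mul_cancel₀ _ hX, sub_self]

lemma covariance_comp_eq_covariance_div_variance_mul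
    (hXZ : HasGaussianLaw (fun ω ↦ (X ω, Z ω)) μ) (hX : Var[X; μ] ≠ 0)
    (hf : MemLp f 2 (μ.map X)) :
    cov[f ∘ X, Z; μ] = cov[X, Z; μ] / Var[X; μ] * cov[f ∘ X, X; μ] := by
  have := hXZ.isProbabilityMeasure
  have hXm := hXZ.fst.aemeasurable
  set c := cov[X, Z; μ] / Var[X; μ]
  have hfX : MemLp (f ∘ X) 2 μ := (memLp_map_measure_iff hf.1 hXm).1 hf
  have hcX : MemLp (fun ω ↦ c * X ω) 2 μ := hXZ.fst.memLp_two.const_mul c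
  have hR : MemLp (fun ω ↦ Z ω - c * X ω) 2 μ := hXZ.snd.memLp_two.sub hcX
  have hindep : IndepFun (f ∘ X) (fun ω ↦ Z ω - c * X ω) μ :=
    (indepFun_sub_covariance_div_variance_mul hXZ hX).comp₀ hXm hR.aemeasurable
      hf.1.aemeasurable aemeasurable_id
  have hzero : cov[f ∘ X, Z; μ] - c * cov[f ∘ X, X; μ] = 0 := by
    rw [← covariance_const_mul_right, ← covariance_fun_sub_right hfX hXZ.snd.memLp_two hcX]
    exact hindep.covariance_eq_zero hfX hR
  exact sub_eq_zero.1 hzero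

lemma integral_comp_mul_eq_covariance_div_variance_mul
    (hXZ : HasGaussianLaw (fun ω ↦ (X ω, Z ω)) μ) (hX : Var[X; μ] ≠ 0)
    (hXmean : μ[X] = 0) (hZmean : μ[Z] = 0) (hf : MemLp f 2 (μ.map X)) :
    ∫ ω, f (X ω) * Z ω ∂μ = cov[X, Z; μ] / Var[X; μ] * ∫ ω, f (X ω) * X ω ∂μ := by
  have := hXZ.isProbabilityMeasure
  have hfX : MemLp (f ∘ X) 2 μ := (memLp_map_measure_iff hf.1 hXZ.fst.aemeasurable).1 hf
  have h := covariance_comp_eq_covariance_div_variance_mul hXZ hX hf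
  rw [covariance_eq_sub hfX hXZ.snd.memLp_two, covariance_eq_sub hfX hXZ.fst.memLp_two,
    hXmean, hZmean, mul_zero, sub_zero, sub_zero] at h
  exact h

end JointlyGaussianPair

section GaussianReal

open scoped NNReal

variable {Ω : Type*} [MeasurableSpace Ω] {μ : Measure Ω} {X : Ω → ℝ} {m : ℝ} {v : ℝ≥0}

lemma hasLaw_of_map_eq_gaussianReal (h : μ.map X = gaussianReal m v) :
    HasLaw X (gaussianReal m v) μ :=
  ⟨.of_map_ne_zero (h ▸ IsProbabilityMeasure.ne_zero _), h⟩

lemma integral_of_map_eq_gaussianReal (h : μ.map X = gaussianReal m v) : μ[X] = m := by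
  rw [(hasLaw_of_map_eq_gaussianReal h).integral_eq, integral_id_gaussianReal]

lemma variance_of_map_eq_gaussianReal (h : μ.map X = gaussianReal m v) : Var[X; μ] = v := by
  rw [(hasLaw_of_map_eq_gaussianReal h).variance_eq, variance_id_gaussianReal]

end GaussianReal

section GaussianVector

variable {Ω : Type*} [MeasurableSpace Ω] {μ : Measure Ω} {ι : Type*} [Fintype ι]
  {x : Ω → ι → ℝ} {S : Matrix ι ι ℝ}

lemma hasGaussianLaw_of_map_dotProduct_eq_gaussianReal
    (h : ∀ u : ι → ℝ, ∃ m v, μ.map (fun ω ↦ u ⬝ᵥ x ω) = gaussianReal m v) :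
    HasGaussianLaw x μ := by
  classical
  have hdot (u : ι → ℝ) : AEMeasurable (fun ω ↦ u ⬝ᵥ x ω) μ := by
    obtain ⟨m, v, huv⟩ := h u
    exact (hasLaw_of_map_eq_gaussianReal huv).aemeasurable
  have hx : AEMeasurable x μ := aemeasurable_pi_iff.2 fun i ↦ by
    simpa only [single_one_dotProduct] using hdot (Pi.single i 1)
  refine ⟨isGaussian_of_map_eq_gaussianReal fun L ↦ ?_⟩
  obtain ⟨u, hu⟩ := (dotProductEquiv ℝ ι).surjective L.toLinearMap
  have hL : L ∘ x = fun ω ↦ u ⬝ᵥ x ω := funext fun ω ↦ (LinearMap.congr_fun hu (x ω)).symm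
  rw [AEMeasurable.map_map_of_aemeasurable (by fun_prop) hx, hL]
  exact h u

lemma hasGaussianLaw_dotProduct_prodMk (hx : HasGaussianLaw x μ) (u v : ι → ℝ) :
    HasGaussianLaw (fun ω ↦ (u ⬝ᵥ x ω, v ⬝ᵥ x ω)) μ := by
  classical
  exact hx.map_fun
    ((dotProductEquiv ℝ ι u).prod (dotProductEquiv ℝ ι v)).toContinuousLinearMap

lemma covariance_dotProduct_of_variance_dotProduct [IsFiniteMeasure μ] (hS : S.IsSymm)
    (hx : MemLp x 2 μ) (hvar : ∀ u : ι → ℝ, Var[fun ω ↦ u ⬝ᵥ x ω; μ] = u ⬝ᵥ S *ᵥ u) (u v : ι → ℝ) :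
    cov[fun ω ↦ u ⬝ᵥ x ω, fun ω ↦ v ⬝ᵥ x ω; μ] = u ⬝ᵥ S *ᵥ v := by
  have hL2 (w : ι → ℝ) : MemLp (fun ω ↦ w ⬝ᵥ x ω) 2 μ :=
    memLp_finsetSum _ fun i _ ↦ (hx.eval i).const_mul (w i)
  have hsymm : v ⬝ᵥ S *ᵥ u = u ⬝ᵥ S *ᵥ v := by
    rw [← dotProduct_transpose_mulVec, hS.eq]
  have hpolar := variance_fun_add (hL2 u) (hL2 v)
  simp only [← add_dotProduct, hvar] at hpolar
  rw [mulVec_add, dotProduct_add, add_dotProduct, add_dotProduct, hsymm] at hpolar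
  linarith

lemma integral_comp_dotProduct_mul_dotProduct (hS : S.PosSemidef)
    (hGauss : ∀ u : ι → ℝ,
      μ.map (fun ω ↦ u ⬝ᵥ x ω) = gaussianReal 0 (u ⬝ᵥ S *ᵥ u).toNNReal)
    {β : ι → ℝ} (hβ : β ⬝ᵥ S *ᵥ β ≠ 0) {f : ℝ → ℝ}
    (hf : MemLp f 2 (gaussianReal 0 (β ⬝ᵥ S *ᵥ β).toNNReal)) (v : ι → ℝ) :
    ∫ ω, f (β ⬝ᵥ x ω) * (v ⬝ᵥ x ω) ∂μ =
      (v ⬝ᵥ S *ᵥ β) / (β ⬝ᵥ S *ᵥ β) * ∫ ω, f (β ⬝ᵥ x ω) * (β ⬝ᵥ x ω) ∂μ := by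
  have hx : HasGaussianLaw x μ :=
    hasGaussianLaw_of_map_dotProduct_eq_gaussianReal fun u ↦ ⟨_, _, hGauss u⟩
  have := hx.isProbabilityMeasure
  have hmean (u : ι → ℝ) : ∫ ω, u ⬝ᵥ x ω ∂μ = 0 := integral_of_map_eq_gaussianReal (hGauss u)
  have hvar (u : ι → ℝ) : Var[fun ω ↦ u ⬝ᵥ x ω; μ] = u ⬝ᵥ S *ᵥ u :=
    (variance_of_map_eq_gaussianReal (hGauss u)).trans
      (Real.coe_toNNReal _ (hS.dotProduct_mulVec_nonneg u))
  have hcov : cov[fun ω ↦ β ⬝ᵥ x ω, fun ω ↦ v ⬝ᵥ x ω; μ] = v ⬝ᵥ S *ᵥ β := by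
    rw [covariance_comm]
    exact covariance_dotProduct_of_variance_dotProduct
      (isHermitian_iff_isSymm.1 hS.isHermitian) hx.memLp_two hvar v β
  rw [← hcov, ← hvar β]
  exact integral_comp_mul_eq_covariance_div_variance_mul (hasGaussianLaw_dotProduct_prodMk hx β v)
    (by rwa [hvar β]) (hmean β) (hmean v) (by rwa [hGauss β])

end GaussianVector

theorem expectation_label_times_gaussian_general {Ω : Type*} [MeasurableSpace Ω] (μ : Measure Ω)
    {ι : Type*} [Fintype ι] (x : Ω → ι → ℝ) (Y : Ω → ℝ) (S : Matrix ι ι ℝ) (hS : S.PosSemidef)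
    (β : ι → ℝ) (f : ℝ → ℝ) (hf : MemLp f 2 (gaussianReal 0 (β ⬝ᵥ S *ᵥ β).toNNReal))
    (hGauss : ∀ u : ι → ℝ,
      μ.map (fun ω ↦ u ⬝ᵥ x ω) = gaussianReal 0 (u ⬝ᵥ S *ᵥ u).toNNReal)
    (hcond : ∀ φ : (ι → ℝ) → ℝ, Measurable φ → Integrable (fun ω ↦ φ (x ω)) μ →
      ∫ ω, Y ω * φ (x ω) ∂μ = ∫ ω, f (β ⬝ᵥ x ω) * φ (x ω) ∂μ)
    (hβ : β ⬝ᵥ S *ᵥ β ≠ 0) (k : ι) :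
    ∫ ω, Y ω * x ω k ∂μ =
      (∫ ω, f (β ⬝ᵥ x ω) * ((β ⬝ᵥ x ω) / (β ⬝ᵥ S *ᵥ β)) ∂μ) * (S *ᵥ β) k := by
  classical
  have hx : HasGaussianLaw x μ :=
    hasGaussianLaw_of_map_dotProduct_eq_gaussianReal fun u ↦ ⟨_, _, hGauss u⟩
  have hregr := integral_comp_dotProduct_mul_dotProduct hS hGauss hβ hf (Pi.single k 1)
  simp only [single_one_dotProduct] at hregr
  rw [hcond (fun z ↦ z k) (measurable_pi_apply k) (hx.integrable.eval k), hregr]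
  simp only [← mul_div_assoc, integral_div]
  ring

/-- For a centered Gaussian vector `x ~ N(0,Σ)` (characterized by every linear
functional `uᵀx` being `N(0, uᵀΣu)`) with `Σ` positive definite, and a `±1` label `y`
with `P(y = 1 ∣ x) = g(βᵀx)` (i.e. `E[y ∣ x] = 2g(βᵀx) − 1`), we have
`E[yx] = 2·E[(g(βᵀx) − 1/2)·βᵀx/(βᵀΣβ)]·Σβ`. -/
theorem expectation_label_times_gaussian {Ω : Type*} [MeasurableSpace Ω] (μ : Measure Ω)
    [IsProbabilityMeasure μ] {d : ℕ} (x : Ω → Fin d → ℝ) (Y : Ω → ℝ)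
    (S : Matrix (Fin d) (Fin d) ℝ) (hS : S.PosDef)
    (β : Fin d → ℝ) (g : ℝ → ℝ) (hg : Measurable g) (hg01 : ∀ t, g t ∈ Set.Icc (0:ℝ) 1)
    (hxmeas : Measurable x) (hYmeas : Measurable Y)
    (hGauss : ∀ u : Fin d → ℝ,
      Measure.map (fun ω => ∑ i, u i * x ω i) μ =
        gaussianReal 0 (Real.toNNReal (u ⬝ᵥ S.mulVec u)))
    (hY : ∀ ω, Y ω = 1 ∨ Y ω = -1)
    (hcond : ∀ φ : (Fin d → ℝ) → ℝ, Measurable φ →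
      Integrable (fun ω => φ (x ω)) μ →
      ∫ ω, Y ω * φ (x ω) ∂μ =
        ∫ ω, (2 * g (∑ i, β i * x ω i) - 1) * φ (x ω) ∂μ)
    (hβ : 0 < β ⬝ᵥ S.mulVec β) :
    ∀ k, ∫ ω, Y ω * x ω k ∂μ =
      2 * (∫ ω, (g (∑ i, β i * x ω i) - 1 / 2) *
            ((∑ i, β i * x ω i) / (β ⬝ᵥ S.mulVec β)) ∂μ) * S.mulVec β k := by
  have hf : MemLp (fun t ↦ 2 * g t - 1) 2 (gaussianReal 0 (β ⬝ᵥ S *ᵥ β).toNNReal) :=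
    .of_bound (by fun_prop) 1 <| ae_of_all _ fun t ↦
      abs_le.2 ⟨by linarith [(hg01 t).1], by linarith [(hg01 t).2]⟩
  simpa only [← integral_const_mul, ← mul_assoc, mul_sub, mul_one_div_cancel (two_ne_zero' ℝ),
    dotProduct] using
    expectation_label_times_gaussian_general μ x Y S hS.posSemidef β _ hf hGauss hcond hβ.ne'
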